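/- The field H = ℚ(√5, √17) has narrow class number 1. -/

import Mathlib

open NumberField Module
open scoped nonZeroDivisors

/-- The narrow class group of a number field `F`: the quotient of the group of invertible
fractional ideals of `F` by the subgroup of principal fractional ideals generated by
totally positive elements. -/
noncomputable def narrowClassGroup (F : Type*) [Field F] [NumberField F] :=
  (FractionalIdeal (𝓞 F)⁰ F)ˣ ⧸
    Subgroup.closure {I : (FractionalIdeal (𝓞 F)⁰ F)ˣ |
      ∃ x : F, (∀ τ : F →+* ℝ, 0 < τ x) ∧
        (I : FractionalIdeal (𝓞 F)⁰ F) = FractionalIdeal.spanSingleton (𝓞 F)⁰ x}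

/-- The narrow class number of a number field. -/
noncomputable def narrowClassNumber (F : Type*) [Field F] [NumberField F] : ℕ :=
  Nat.card (narrowClassGroup F)

/-!
Since `𝓞 H` contains `1, (1 + √5)/2, (1 + √17)/2` and their product, `discr H` divides `85²`, so the
Minkowski bound of the totally real field `H` is less than `8`. Each prime `p ≤ 7` is inert in
`ℚ(√5)` or in `ℚ(√17)`, so no prime of `H` above it has residue degree `1`; hence the only prime
ideals to consider are those of norm `4`, and they are generated by `(5 ± √17)/2`. Thus `𝓞 H` is
principal. Finally `(2 + √5 + √17)/2` is a unit which is negative at exactly one of the four real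
embeddings, so products of its conjugates realise all signatures and every nonzero element becomes
totally positive after multiplication by a unit.
-/

section Ideals

theorem ideal_eq_of_le_of_absNorm_eq {S : Type*} [CommRing S] [IsDedekindDomain S]
    [Module.Free ℤ S] {I J : Ideal S} (hle : I ≤ J) (hJ : J.absNorm ≠ 0)
    (h : I.absNorm = J.absNorm) : I = J := by
  obtain ⟨Q, rfl⟩ := Ideal.dvd_iff_le.mpr hle
  rw [map_mul, Nat.mul_eq_left hJ, Ideal.absNorm_eq_one_iff] at h
  rw [h, Ideal.mul_top]

theorem exists_sub_algebraMap_mem_of_inertiaDeg_eq_one {R S : Type*} [CommRing R] [CommRing S]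
    [Algebra R S] (P : Ideal S) [P.IsMaximal] [(P.under R).IsMaximal]
    (hP : P.inertiaDeg R = 1) (x : S) : ∃ r : R, x - algebraMap R S r ∈ P := by
  let := Ideal.Quotient.field (P.under R)
  let := Ideal.Quotient.field P
  rw [Ideal.inertiaDeg_eq_of_isMaximal (P.under R) P,
    ← Subalgebra.bot_eq_top_iff_finrank_eq_one, eq_comm, ← Algebra.surjective_algebraMap_iff] at hP
  obtain ⟨r, hr⟩ := hP (Ideal.Quotient.mk P x)
  obtain ⟨r, rfl⟩ := Ideal.Quotient.mk_surjective r
  exact ⟨r, Ideal.Quotient.eq.mp hr.symm⟩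

open Polynomial in
theorem inertiaDeg_ne_one_of_forall_aeval_ne_zero {S : Type*} [CommRing S] {p : ℕ}
    (hp : p.Prime) (P : Ideal S) [P.IsMaximal] [P.LiesOver (Ideal.span {(p : ℤ)})] {f : ℤ[X]}
    {x : S} (hx : aeval x f = 0) (hf : ∀ y : ZMod p, aeval y f ≠ 0) : P.inertiaDeg ℤ ≠ 1 := by
  intro hP
  have : Fact p.Prime := ⟨hp⟩
  have hover : P.under ℤ = Ideal.span {(p : ℤ)} := (Ideal.over_def P _).symm
  have : (P.under ℤ).IsMaximal := hover ▸ Int.ideal_span_isMaximal_of_prime p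
  obtain ⟨r, hr⟩ := exists_sub_algebraMap_mem_of_inertiaDeg_eq_one (R := ℤ) P hP x
  have hfr : f.eval r ∈ P.under ℤ := by
    have hdvd := sub_dvd_eval_sub x (algebraMap ℤ S r) (f.map (algebraMap ℤ S))
    rw [eval_map_algebraMap, hx, zero_sub, dvd_neg, eval_map_apply] at hdvd
    exact P.mem_of_dvd hdvd hr
  rw [hover, Ideal.mem_span_singleton, ← ZMod.intCast_zmod_eq_zero_iff_dvd] at hfr
  exact hf r ((aeval_algebraMap_apply_eq_algebraMap_eval r f).trans hfr)

open Polynomial in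
theorem inertiaDeg_ne_one_of_forall_sq_sub_self_ne {S : Type*} [CommRing S] {p : ℕ}
    (hp : p.Prime) (P : Ideal S) [P.IsMaximal] [P.LiesOver (Ideal.span {(p : ℤ)})] {c : ℤ}
    {x : S} (hx : x ^ 2 - x = c) (hc : ∀ y : ZMod p, y ^ 2 - y ≠ c) : P.inertiaDeg ℤ ≠ 1 :=
  inertiaDeg_ne_one_of_forall_aeval_ne_zero hp P (f := X ^ 2 - X - C c) (x := x)
    (by simp [hx]) fun y ↦ by simpa [sub_eq_zero] using hc y

end Ideals

section Discriminant

theorem discr_basis_dvd_discr {ι A B : Type*} [Fintype ι] [DecidableEq ι] [CommRing A]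
    [CommRing B] [Algebra A B] (e : Basis ι A B) (v : ι → B) :
    Algebra.discr A e ∣ Algebra.discr A v := by
  rw [← e.toMatrix_map_vecMul v, Algebra.discr_of_matrix_vecMul]
  exact dvd_mul_left _ _

variable {K : Type*} [Field K] [NumberField K] {ι : Type*} [Fintype ι] [DecidableEq ι]

theorem discr_dvd_discr_of_card_eq_finrank (hι : Fintype.card ι = finrank ℚ K) (v : ι → 𝓞 K) :
    discr K ∣ Algebra.discr ℤ v := by
  let e : Basis ι ℤ (𝓞 K) := (RingOfIntegers.basis K).reindex <| Fintype.equivOfCardEq <| by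
    rw [← finrank_eq_card_chooseBasisIndex, RingOfIntegers.rank, hι]
  rw [← discr_eq_discr K e]
  exact discr_basis_dvd_discr e v

theorem coe_discr_int (v : ι → 𝓞 K) :
    (Algebra.discr ℤ v : ℚ) = Algebra.discr ℚ fun i ↦ (v i : K) := by
  rw [Algebra.discr_def, Algebra.discr_def, ← eq_intCast (Int.castRingHom ℚ), RingHom.map_det]
  congr 1
  ext i j
  simp [Algebra.traceMatrix_apply, Algebra.traceForm_apply, Algebra.coe_trace_int]

end Discriminant

section NarrowClassNumber

variable {K : Type*} [Field K]

theorem exists_unit_neg_iff_mem (h : ∀ τ₀ : K →+* ℝ, ∃ u : (𝓞 K)ˣ, ∀ τ, τ u < 0 ↔ τ = τ₀)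
    (s : Finset (K →+* ℝ)) : ∃ u : (𝓞 K)ˣ, ∀ τ : K →+* ℝ, τ u < 0 ↔ τ ∈ s := by
  classical
  induction s using Finset.induction_on with
  | empty => exact ⟨1, by simp⟩
  | insert τ₀ s hτ₀ ih =>
    obtain ⟨u₀, hu₀⟩ := h τ₀
    obtain ⟨u, hu⟩ := ih
    refine ⟨u₀ * u, fun τ ↦ ?_⟩
    have hu₀_pos : 0 < τ u₀ ↔ τ ≠ τ₀ := by
      rw [Ne, ← hu₀, not_lt, le_iff_lt_or_eq']
      simp
    have hu_pos : 0 < τ u ↔ τ ∉ s := by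
      rw [← hu, not_lt, le_iff_lt_or_eq']
      simp
    rw [Units.val_mul, map_mul, map_mul, mul_neg_iff, hu₀, hu, hu₀_pos, hu_pos, Finset.mem_insert]
    grind

variable [NumberField K]

theorem exists_unit_mul_totally_positive
    (h : ∀ τ₀ : K →+* ℝ, ∃ u : (𝓞 K)ˣ, ∀ τ, τ u < 0 ↔ τ = τ₀) {x : K} (hx : x ≠ 0) :
    ∃ u : (𝓞 K)ˣ, ∀ τ : K →+* ℝ, 0 < τ (u * x) := by
  obtain ⟨u, hu⟩ := exists_unit_neg_iff_mem h (Set.toFinite {τ | τ x < 0}).toFinset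
  refine ⟨u, fun τ ↦ ?_⟩
  have hτu : τ u ≠ 0 := by simp
  have hτx : τ x ≠ 0 := (map_ne_zero τ).mpr hx
  have hsign : τ u < 0 ↔ τ x < 0 := by simpa using hu τ
  rw [map_mul, mul_pos_iff]
  grind

theorem narrowClassNumber_eq_one [IsPrincipalIdealRing (𝓞 K)]
    (h : ∀ τ₀ : K →+* ℝ, ∃ u : (𝓞 K)ˣ, ∀ τ, τ u < 0 ↔ τ = τ₀) : narrowClassNumber K = 1 := by
  refine Subgroup.index_eq_one.mpr (eq_top_iff.mpr fun I _ ↦ Subgroup.subset_closure ?_)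
  obtain ⟨x, hx⟩ := (FractionalIdeal.isPrincipal_iff (I : FractionalIdeal (𝓞 K)⁰ K)).mp
    inferInstance
  have hx0 : x ≠ 0 := by
    rintro rfl
    exact I.ne_zero (by rw [hx, FractionalIdeal.spanSingleton_zero])
  obtain ⟨u, hu⟩ := exists_unit_mul_totally_positive h hx0
  refine ⟨u * x, hu, ?_⟩
  rw [← FractionalIdeal.spanSingleton_mul_spanSingleton, ← hx,
    ← FractionalIdeal.coeIdeal_span_singleton,
    Ideal.span_singleton_eq_top.mpr u.isUnit, FractionalIdeal.coeIdeal_top, one_mul]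

end NarrowClassNumber

section SquareRoots

variable {F K : Type*} [Field F] [Field K] [Algebra F K] {m n : F} {a b : K}

theorem eq_zero_of_sq_eq_mul_sq (hm : ¬ IsSquare m) {p q : F} (h : p ^ 2 = m * q ^ 2) :
    p = 0 ∧ q = 0 := by
  have hq : q = 0 := by
    by_contra hq
    exact hm ⟨p / q, by field_simp; exact h.symm⟩
  exact ⟨by simpa [hq] using h, hq⟩

theorem eq_zero_of_smul_one_add_smul_sqrt_eq_zero (hm : ¬ IsSquare m)
    (ha : a ^ 2 = algebraMap F K m) {p q : F} (hpq : p • 1 + q • a = 0) : p = 0 ∧ q = 0 := by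
  refine eq_zero_of_sq_eq_mul_sq hm ?_
  apply FaithfulSMul.algebraMap_injective F K
  simp only [Algebra.smul_def, map_mul, map_pow] at hpq ⊢
  linear_combination (algebraMap F K p - algebraMap F K q * a) * hpq +
    algebraMap F K q ^ 2 * ha

theorem sqrt_ne_smul_one_add_smul_sqrt [NeZero (2 : F)] (hm : ¬ IsSquare m) (hn : ¬ IsSquare n)
    (hmn : ¬ IsSquare (m * n)) (ha : a ^ 2 = algebraMap F K m) (hb : b ^ 2 = algebraMap F K n)
    (u v : F) : b ≠ u • 1 + v • a := by
  rintro rfl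
  have hsq : (u ^ 2 + m * v ^ 2 - n) • (1 : K) + (2 * (u * v)) • a = 0 := by
    simp only [Algebra.smul_def, map_add, map_sub, map_mul, map_pow, map_ofNat] at hb ⊢
    linear_combination hb - algebraMap F K v ^ 2 * ha
  obtain ⟨hn_eq, huv⟩ := eq_zero_of_smul_one_add_smul_sqrt_eq_zero hm ha hsq
  rcases mul_eq_zero.mp ((mul_eq_zero_iff_left two_ne_zero).mp huv) with rfl | rfl
  · exact hmn ⟨m * v, by linear_combination -m * hn_eq⟩
  · exact hn ⟨u, by linear_combination -hn_eq⟩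

theorem linearIndependent_one_sqrt_sqrt_mul [NeZero (2 : F)] (hm : ¬ IsSquare m)
    (hn : ¬ IsSquare n) (hmn : ¬ IsSquare (m * n)) (ha : a ^ 2 = algebraMap F K m)
    (hb : b ^ 2 = algebraMap F K n) : LinearIndependent F ![1, a, b, a * b] := by
  rw [Fintype.linearIndependent_iff]
  intro g hg
  simp only [Fin.sum_univ_four, Matrix.cons_val] at hg
  obtain ⟨h2, h3⟩ : g 2 = 0 ∧ g 3 = 0 := by
    refine eq_zero_of_sq_eq_mul_sq hm (by_contra fun hne ↦ ?_)
    have hN : algebraMap F K (g 2 ^ 2 - m * g 3 ^ 2) ≠ 0 :=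
      (map_ne_zero _).mpr (sub_ne_zero.mpr hne)
    -- Solve `g 0 + g 1 * a + (g 2 + g 3 * a) * b = 0` for `b`.
    refine sqrt_ne_smul_one_add_smul_sqrt hm hn hmn ha hb
      ((m * g 1 * g 3 - g 0 * g 2) / (g 2 ^ 2 - m * g 3 ^ 2))
      ((g 0 * g 3 - g 1 * g 2) / (g 2 ^ 2 - m * g 3 ^ 2)) (mul_left_cancel₀ hN ?_)
    simp only [Algebra.smul_def, map_div₀, mul_one, mul_add, ← mul_assoc, mul_div_cancel₀ _ hN]
      at hg ⊢
    simp only [map_sub, map_mul, map_pow]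
    linear_combination (algebraMap F K (g 2) - algebraMap F K (g 3) * a) * hg +
      (algebraMap F K (g 1) * algebraMap F K (g 3) + algebraMap F K (g 3) ^ 2 * b) * ha
  obtain ⟨h0, h1⟩ := eq_zero_of_smul_one_add_smul_sqrt_eq_zero hm ha (by simpa [h2, h3] using hg)
  simp [Fin.forall_fin_succ, h0, h1, h2, h3]

variable (F) in
theorem cons_sqrt_eq_combination (a b : K) (i : Fin 4) :
    ![1, a, b, a * b] i =
      (if i = 0 then 1 else 0 : F) • 1 + (if i = 1 then 1 else 0 : F) • a +
        (if i = 2 then 1 else 0 : F) • b + (if i = 3 then 1 else 0 : F) • (a * b) := by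
  fin_cases i <;> simp

theorem biquadratic_mul (ha : a ^ 2 = algebraMap F K m) (hb : b ^ 2 = algebraMap F K n)
    (p q r s p' q' r' s' : F) :
    (p • 1 + q • a + r • b + s • (a * b)) * (p' • 1 + q' • a + r' • b + s' • (a * b)) =
      (p * p' + m * q * q' + n * r * r' + m * n * s * s') • 1 +
      (p * q' + q * p' + n * (r * s' + s * r')) • a +
      (p * r' + r * p' + m * (q * s' + s * q')) • b +
      (p * s' + s * p' + q * r' + r * q') • (a * b) := by
  simp only [Algebra.smul_def, map_add, map_mul, ← ha, ← hb]
  ring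

end SquareRoots

/-- `K = F(√m, √n)` is a biquadratic extension of `F` with chosen square roots `a = √m` and
`b = √n`. -/
structure IsBiquadratic {F K : Type*} [Field F] [Field K] [Algebra F K] (m n : F) (a b : K) :
    Prop where
  sq_left : a ^ 2 = algebraMap F K m
  sq_right : b ^ 2 = algebraMap F K n
  not_isSquare_left : ¬ IsSquare m
  not_isSquare_right : ¬ IsSquare n
  not_isSquare_mul : ¬ IsSquare (m * n)
  finrank_eq : finrank F K = 4

namespace IsBiquadratic

section Field

variable {F K : Type*} [Field F] [Field K] [Algebra F K] {m n : F} {a b : K}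

theorem neg_left (h : IsBiquadratic m n a b) : IsBiquadratic m n (-a) b :=
  { h with sq_left := by rw [neg_sq, h.sq_left] }

theorem neg_right (h : IsBiquadratic m n a b) : IsBiquadratic m n a (-b) :=
  { h with sq_right := by rw [neg_sq, h.sq_right] }

theorem left_ne_zero (h : IsBiquadratic m n a b) : a ≠ 0 := by
  rintro rfl
  have : m = 0 := by simpa using h.sq_left.symm
  exact h.not_isSquare_left (this ▸ IsSquare.zero)

theorem right_ne_zero (h : IsBiquadratic m n a b) : b ≠ 0 := by
  rintro rfl
  have : n = 0 := by simpa using h.sq_right.symm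
  exact h.not_isSquare_right (this ▸ IsSquare.zero)

variable [NeZero (2 : F)]

/-- The basis `1, a, b, ab` of the biquadratic extension `F(a, b)`. -/
noncomputable def basis (h : IsBiquadratic m n a b) : Basis (Fin 4) F K :=
  basisOfLinearIndependentOfCardEqFinrank (linearIndependent_one_sqrt_sqrt_mul
    h.not_isSquare_left h.not_isSquare_right h.not_isSquare_mul h.sq_left h.sq_right)
    (by simp [h.finrank_eq])

theorem coe_basis (h : IsBiquadratic m n a b) : ⇑h.basis = ![1, a, b, a * b] :=
  coe_basisOfLinearIndependentOfCardEqFinrank _ _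

theorem basis_repr (h : IsBiquadratic m n a b) (p q r s : F) :
    ⇑(h.basis.repr (p • 1 + q • a + r • b + s • (a * b))) = ![p, q, r, s] := by
  rw [← h.basis.repr_sum_self ![p, q, r, s]]
  simp [Fin.sum_univ_four, coe_basis]

theorem exists_eq_combination (h : IsBiquadratic m n a b) (x : K) :
    ∃ p q r s : F, x = p • 1 + q • a + r • b + s • (a * b) :=
  ⟨_, _, _, _, by simpa [Fin.sum_univ_four, coe_basis] using (h.basis.sum_repr x).symm⟩

theorem ringHom_ext (h : IsBiquadratic m n a b) {R : Type*} [Semiring R] {f g : K →+* R}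
    (hF : f.comp (algebraMap F K) = g.comp (algebraMap F K)) (ha : f a = g a) (hb : f b = g b) :
    f = g := by
  have hF' (t : F) : f (algebraMap F K t) = g (algebraMap F K t) := RingHom.congr_fun hF t
  ext x
  obtain ⟨p, q, r, s, rfl⟩ := h.exists_eq_combination x
  simp only [Algebra.smul_def, map_add, map_mul, map_one, hF', ha, hb]

theorem leftMulMatrix_basis (h : IsBiquadratic m n a b) (p q r s : F) :
    Algebra.leftMulMatrix h.basis (p • 1 + q • a + r • b + s • (a * b)) =
      !![p, m * q, n * r, m * n * s;
        q, p, n * s, n * r;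
        r, m * s, p, m * q;
        s, r, q, p] := by
  ext i j
  rw [Algebra.leftMulMatrix_eq_repr_mul, coe_basis,
    cons_sqrt_eq_combination F a b j, biquadratic_mul h.sq_left h.sq_right,
    basis_repr]
  fin_cases i <;> fin_cases j <;> simp

theorem trace_combination (h : IsBiquadratic m n a b) (p q r s : F) :
    Algebra.trace F K (p • 1 + q • a + r • b + s • (a * b)) = 4 * p := by
  rw [Algebra.trace_eq_matrix_trace h.basis, leftMulMatrix_basis]
  simp only [Matrix.trace, Matrix.diag_apply, Fin.sum_univ_four, Matrix.of_apply, Matrix.cons_val]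
  ring

-- The right-hand side is the norm of `(p + r * b) ^ 2 - m * (q + s * b) ^ 2` from `F(b)` to `F`.
theorem norm_combination (h : IsBiquadratic m n a b) (p q r s : F) :
    Algebra.norm F (p • 1 + q • a + r • b + s • (a * b)) =
      (p ^ 2 - m * q ^ 2 + n * r ^ 2 - m * n * s ^ 2) ^ 2 - 4 * n * (p * r - m * q * s) ^ 2 := by
  rw [Algebra.norm_eq_matrix_det h.basis, leftMulMatrix_basis, Matrix.det_succ_row_zero]
  simp only [Fin.sum_univ_four, Matrix.det_fin_three, Matrix.submatrix_apply, Matrix.of_apply,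
    Matrix.cons_val, Fin.succAbove, Fin.reduceSucc, Fin.reduceCastSucc, Fin.reduceLT, ↓reduceIte,
    Fin.coe_ofNat_eq_mod]
  ring

theorem traceMatrix (h : IsBiquadratic m n a b) :
    Algebra.traceMatrix F ![1, a, b, a * b] =
      Matrix.diagonal ![4, 4 * m, 4 * n, 4 * (m * n)] := by
  ext i j
  rw [Algebra.traceMatrix_apply, Algebra.traceForm_apply,
    cons_sqrt_eq_combination F a b i, cons_sqrt_eq_combination F a b j,
    biquadratic_mul h.sq_left h.sq_right, trace_combination h]
  fin_cases i <;> fin_cases j <;> simp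

end Field
end IsBiquadratic

theorem conj_eq_self_of_sq_eq_ofReal {z : ℂ} {r : ℝ} (hr : 0 ≤ r) (hz : z ^ 2 = r) :
    starRingEnd ℂ z = z := by
  rw [← Real.sq_sqrt hr, Complex.ofReal_pow] at hz
  rcases sq_eq_sq_iff_eq_or_eq_neg.mp hz with rfl | rfl <;> simp

section RingOfIntegers

variable {K : Type*} [Field K]

theorem exists_integer_sq_sub_self_eq_and_coe_eq [CharZero K] {k : ℤ} {a : K}
    (ha : a ^ 2 = 4 * k + 1) :
    ∃ φ : 𝓞 K, φ ^ 2 - φ = k ∧ algebraMap (𝓞 K) K φ = (1 + a) / 2 := by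
  have hroot : ((1 + a) / 2) ^ 2 - (1 + a) / 2 = k := by linear_combination ha / 4
  have hint : IsIntegral ℤ ((1 + a) / 2) :=
    ⟨.X ^ 2 - .X - .C k, by monicity!, by rw [← Polynomial.aeval_def]; simp [hroot]⟩
  obtain ⟨φ, hφ⟩ := (IsIntegralClosure.isIntegral_iff (A := 𝓞 K)).mp hint
  refine ⟨φ, RingOfIntegers.coe_injective ?_, hφ⟩
  rw [map_sub, map_pow, hφ, hroot, map_intCast]

end RingOfIntegers

namespace IsBiquadratic

theorem discr_one_sqrt_sqrt_mul {F K : Type*} [Field F] [Field K] [Algebra F K] [NeZero (2 : F)]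
    {m n : F} {a b : K} (h : IsBiquadratic m n a b) :
    Algebra.discr F ![1, a, b, a * b] = 256 * (m * n) ^ 2 := by
  rw [Algebra.discr_def, h.traceMatrix, Matrix.det_diagonal]
  simp only [Fin.prod_univ_four, Matrix.cons_val]
  ring

section NumberField

variable {K : Type*} [Field K] [NumberField K] {m n : ℤ} {a b : K}

theorem discr_dvd_sq_mul (h : IsBiquadratic (m : ℚ) n a b) (hm : m % 4 = 1) (hn : n % 4 = 1) :
    discr K ∣ (m * n) ^ 2 := by
  obtain ⟨k, rfl⟩ : ∃ k, m = 4 * k + 1 := ⟨m / 4, by omega⟩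
  obtain ⟨l, rfl⟩ : ∃ l, n = 4 * l + 1 := ⟨n / 4, by omega⟩
  obtain ⟨φ, -, hφ⟩ := exists_integer_sq_sub_self_eq_and_coe_eq (by simpa using h.sq_left)
  obtain ⟨ω, -, hω⟩ := exists_integer_sq_sub_self_eq_and_coe_eq (by simpa using h.sq_right)
  let P : Matrix (Fin 4) (Fin 4) ℚ :=
    !![1, 0, 0, 0; 1 / 2, 1 / 2, 0, 0; 1 / 2, 0, 1 / 2, 0; 1 / 4, 1 / 4, 1 / 4, 1 / 4]
  have hP : P.det = 1 / 16 := by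
    have hlower : P.IsLowerTriangular := by
      intro i j hij
      revert i j
      simp [Fin.forall_fin_succ, P]
    rw [Matrix.det_of_isLowerTriangular P hlower]
    simp only [P, Fin.prod_univ_four, Matrix.of_apply, Matrix.cons_val]
    norm_num
  have hv : (fun i ↦ (![1, φ, ω, φ * ω] i : K)) =
      (P.map (algebraMap ℚ K)).mulVec ![1, a, b, a * b] := by
    ext i
    fin_cases i <;> simp [P, hφ, hω, Matrix.mulVec, dotProduct, Fin.sum_univ_four] <;> ring
  have hdiscr : Algebra.discr ℤ ![1, φ, ω, φ * ω] = ((4 * k + 1) * (4 * l + 1)) ^ 2 := by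
    rw [← Int.cast_inj (α := ℚ), coe_discr_int, hv, Algebra.discr_of_matrix_mulVec, hP,
      h.discr_one_sqrt_sqrt_mul]
    push_cast
    ring
  rw [← hdiscr]
  exact discr_dvd_discr_of_card_eq_finrank (by simp [h.finrank_eq]) _

end NumberField

section Rat

variable {K : Type*} [Field K] [CharZero K] {m n : ℚ} {a b : K}

theorem isTotallyReal (h : IsBiquadratic m n a b) (hm : 0 ≤ m) (hn : 0 ≤ n) :
    IsTotallyReal K := by
  refine ⟨fun w ↦ ?_⟩
  have hsq {x : K} {r : ℚ} (hx : x ^ 2 = algebraMap ℚ K r) :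
      w.embedding x ^ 2 = ((r : ℝ) : ℂ) := by
    rw [← map_pow, hx]; simp
  rw [InfinitePlace.isReal_iff, ComplexEmbedding.isReal_iff]
  refine h.ringHom_ext (Subsingleton.elim _ _) ?_ ?_
  · exact conj_eq_self_of_sq_eq_ofReal (by exact_mod_cast hm) (hsq h.sq_left)
  · exact conj_eq_self_of_sq_eq_ofReal (by exact_mod_cast hn) (hsq h.sq_right)

theorem eq_of_map_neg (h : IsBiquadratic m n a b) {τ τ' : K →+* ℝ} (ha : τ a < 0) (hb : τ b < 0)
    (ha' : τ' a < 0) (hb' : τ' b < 0) : τ = τ' := by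
  have heq {x : K} {r : ℚ} (hx : x ^ 2 = algebraMap ℚ K r) (hτ : τ x < 0) (hτ' : τ' x < 0) :
      τ x = τ' x := by
    have hsq : τ x ^ 2 = τ' x ^ 2 := by rw [← map_pow, ← map_pow, hx]; simp
    rcases sq_eq_sq_iff_eq_or_eq_neg.mp hsq with h | h <;> linarith
  exact h.ringHom_ext (Subsingleton.elim _ _) (heq h.sq_left ha ha') (heq h.sq_right hb hb')

end Rat
end IsBiquadratic

theorem two_add_add_neg_iff {s t : ℝ} (hs : s ^ 2 = 5) (ht : t ^ 2 = 17) :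
    2 + s + t < 0 ↔ s < 0 ∧ t < 0 := by
  constructor
  · intro h
    constructor <;> by_contra! hnonneg
    · have : 11 / 5 < s := by nlinarith
      have : -(21 / 5) < t := by nlinarith
      linarith
    · have : -(12 / 5) < s := by nlinarith
      have : 4 < t := by nlinarith
      linarith
  · rintro ⟨hs0, ht0⟩
    nlinarith

namespace IsBiquadratic

section CharZero

variable {K : Type*} [Field K] [CharZero K] {a b : K}

theorem exists_integer_coe_eq_one_add_left_div_two (h : IsBiquadratic (5 : ℚ) 17 a b) :
    ∃ φ : 𝓞 K, φ ^ 2 - φ = (1 : ℤ) ∧ algebraMap (𝓞 K) K φ = (1 + a) / 2 :=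
  exists_integer_sq_sub_self_eq_and_coe_eq (by norm_num [h.sq_left])

theorem exists_integer_coe_eq_one_add_right_div_two (h : IsBiquadratic (5 : ℚ) 17 a b) :
    ∃ ω : 𝓞 K, ω ^ 2 - ω = (4 : ℤ) ∧ algebraMap (𝓞 K) K ω = (1 + b) / 2 :=
  exists_integer_sq_sub_self_eq_and_coe_eq (by norm_num [h.sq_right])

end CharZero

variable {K : Type*} [Field K] [NumberField K] {a b : K}

theorem exists_unit_coe_eq (h : IsBiquadratic (5 : ℚ) 17 a b) :
    ∃ u : (𝓞 K)ˣ, (u : K) = (2 + a + b) / 2 := by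
  obtain ⟨φ, -, hφ⟩ := h.exists_integer_coe_eq_one_add_left_div_two
  obtain ⟨ω, -, hω⟩ := h.exists_integer_coe_eq_one_add_right_div_two
  have hcoe : algebraMap (𝓞 K) K (φ + ω) = (2 + a + b) / 2 := by
    rw [map_add, hφ, hω]
    ring
  have hnorm : Algebra.norm ℚ ((2 + a + b) / 2) = -1 := by
    convert h.norm_combination 1 (1 / 2) (1 / 2) 0 using 1
    · congr 1
      simp only [Algebra.smul_def, map_div₀, map_one, map_zero, map_ofNat]
      ring
    · norm_num
  have hunit : IsUnit (φ + ω) := by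
    rw [NumberField.isUnit_iff_norm, RingOfIntegers.coe_norm, RingOfIntegers.coe_eq_algebraMap,
      hcoe, hnorm, abs_neg, abs_one]
  exact ⟨hunit.unit, hcoe⟩

theorem exists_unit_neg_iff_eq (h : IsBiquadratic (5 : ℚ) 17 a b) (τ₀ : K →+* ℝ) :
    ∃ u : (𝓞 K)ˣ, ∀ τ : K →+* ℝ, τ u < 0 ↔ τ = τ₀ := by
  wlog ha₀ : τ₀ a < 0 generalizing a
  · refine this h.neg_left ?_
    rw [map_neg, neg_lt_zero]
    exact (not_lt.mp ha₀).lt_of_ne' ((map_ne_zero τ₀).mpr h.left_ne_zero)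
  wlog hb₀ : τ₀ b < 0 generalizing b
  · refine this h.neg_right ?_
    rw [map_neg, neg_lt_zero]
    exact (not_lt.mp hb₀).lt_of_ne' ((map_ne_zero τ₀).mpr h.right_ne_zero)
  obtain ⟨u, hu⟩ := h.exists_unit_coe_eq
  refine ⟨u, fun τ ↦ ?_⟩
  have hneg : τ u < 0 ↔ τ a < 0 ∧ τ b < 0 := by
    have hτa : τ a ^ 2 = 5 := by rw [← map_pow, h.sq_left, map_ofNat, map_ofNat]
    have hτb : τ b ^ 2 = 17 := by rw [← map_pow, h.sq_right, map_ofNat, map_ofNat]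
    rw [← two_add_add_neg_iff hτa hτb, hu, map_div₀, map_add, map_add, map_ofNat,
      div_lt_iff₀ two_pos, zero_mul]
  rw [hneg]
  constructor
  · rintro ⟨ha, hb⟩
    exact h.eq_of_map_neg ha hb ha₀ hb₀
  · rintro rfl
    exact ⟨ha₀, hb₀⟩

theorem floor_minkowskiBound_le (h : IsBiquadratic (5 : ℚ) 17 a b) :
    ⌊(4 / Real.pi) ^ InfinitePlace.nrComplexPlaces K *
      ((finrank ℚ K).factorial / (finrank ℚ K : ℝ) ^ finrank ℚ K * √|(discr K : ℝ)|)⌋₊ ≤ 7 := by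
  have := h.isTotallyReal (by norm_num) (by norm_num)
  have hdvd : discr K ∣ (5 * 17) ^ 2 :=
    discr_dvd_sq_mul (m := 5) (n := 17) (by exact_mod_cast h) rfl rfl
  have hdiscr : |(discr K : ℝ)| ≤ 85 ^ 2 := by
    exact_mod_cast Int.le_of_dvd (by norm_num) ((abs_dvd _ _).mpr hdvd)
  have hsqrt : √|(discr K : ℝ)| ≤ 85 := Real.sqrt_le_iff.mpr ⟨by norm_num, hdiscr⟩
  rw [IsTotallyReal.nrComplexPlaces_eq_zero, h.finrank_eq, ← Nat.lt_succ_iff,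
    Nat.floor_lt (by positivity), pow_zero, one_mul, show Nat.factorial 4 = 24 from rfl]
  push_cast
  linarith

theorem two_le_inertiaDeg (h : IsBiquadratic (5 : ℚ) 17 a b) {p : ℕ} (hp : p.Prime) (hp7 : p ≤ 7)
    (P : Ideal (𝓞 K)) [P.IsPrime] [P.LiesOver (Ideal.span {(p : ℤ)})] : 2 ≤ P.inertiaDeg ℤ := by
  have : (Ideal.span {(p : ℤ)}).IsMaximal :=
    PrincipalIdealRing.isMaximal_of_irreducible (Nat.prime_iff_prime_int.mp hp).irreducible
  have : P.IsMaximal := .of_liesOver_isMaximal P (Ideal.span {(p : ℤ)})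
  have hpos := P.inertiaDeg_pos ℤ
  obtain ⟨φ, hφ, -⟩ := h.exists_integer_coe_eq_one_add_left_div_two
  obtain ⟨ω, hω, -⟩ := h.exists_integer_coe_eq_one_add_right_div_two
  suffices P.inertiaDeg ℤ ≠ 1 by lia
  have hprimes : ∀ q ≤ 7, q.Prime → q = 2 ∨ q = 3 ∨ q = 5 ∨ q = 7 := by decide
  obtain rfl | rfl | rfl | rfl := hprimes p hp7 hp
  · exact inertiaDeg_ne_one_of_forall_sq_sub_self_ne hp P hφ (by decide)
  · exact inertiaDeg_ne_one_of_forall_sq_sub_self_ne hp P hφ (by decide)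
  · exact inertiaDeg_ne_one_of_forall_sq_sub_self_ne hp P hω (by decide)
  · exact inertiaDeg_ne_one_of_forall_sq_sub_self_ne hp P hφ (by decide)

theorem exists_integer_coe_eq_and_absNorm_eq_four (h : IsBiquadratic (5 : ℚ) 17 a b) :
    ∃ x : 𝓞 K, algebraMap (𝓞 K) K x = (5 + b) / 2 ∧ (Ideal.span {x}).absNorm = 4 := by
  obtain ⟨ω, -, hω⟩ := h.exists_integer_coe_eq_one_add_right_div_two
  have hcoe : algebraMap (𝓞 K) K (ω + 2) = (5 + b) / 2 := by
    rw [map_add, hω, map_ofNat]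
    ring
  refine ⟨ω + 2, hcoe, ?_⟩
  have hnorm : Algebra.norm ℤ (ω + 2) = 4 := by
    rw [← Int.cast_inj (α := ℚ), Algebra.coe_norm_int, RingOfIntegers.coe_eq_algebraMap, hcoe]
    convert h.norm_combination (5 / 2) 0 (1 / 2) 0 using 1
    · congr 1
      simp only [Algebra.smul_def, map_div₀, map_one, map_zero, map_ofNat]
      ring
    · norm_num
  rw [Ideal.absNorm_span_singleton, hnorm]
  rfl

theorem isPrincipal_of_absNorm_eq_four (h : IsBiquadratic (5 : ℚ) 17 a b) {P : Ideal (𝓞 K)}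
    [P.IsPrime] (h2 : 2 ∈ P) (hP : P.absNorm = 4) : Submodule.IsPrincipal P := by
  obtain ⟨x, hx, hx4⟩ := h.exists_integer_coe_eq_and_absNorm_eq_four
  obtain ⟨y, hy, hy4⟩ := h.neg_right.exists_integer_coe_eq_and_absNorm_eq_four
  have hxy : x * y = 2 := by
    have hb : b ^ 2 = 17 := by simpa using h.sq_right
    apply RingOfIntegers.coe_injective
    rw [map_mul, hx, hy, map_ofNat]
    linear_combination -hb / 4
  have isPrincipal_of_mem {z : 𝓞 K} (hz : z ∈ P) (hz4 : (Ideal.span {z}).absNorm = 4) :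
      Submodule.IsPrincipal P :=
    ⟨z, (ideal_eq_of_le_of_absNorm_eq ((Ideal.span_singleton_le_iff_mem P).mpr hz)
      (by simp [hP]) (hz4.trans hP.symm)).symm⟩
  rcases Ideal.IsPrime.mem_or_mem ‹_› (hxy ▸ h2) with hxP | hyP
  · exact isPrincipal_of_mem hxP hx4
  · exact isPrincipal_of_mem hyP hy4

theorem isPrincipalIdealRing (h : IsBiquadratic (5 : ℚ) 17 a b) : IsPrincipalIdealRing (𝓞 K) := by
  refine RingOfIntegers.isPrincipalIdealRing_of_isPrincipal_of_pow_le_of_mem_primesOver_of_mem_Icc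
    fun p hpmem hp P ⟨_, _⟩ hpow ↦ ?_
  have hp7 : p ≤ 7 := (Finset.mem_Icc.mp hpmem).2.trans h.floor_minkowskiBound_le
  replace hpow : p ^ P.inertiaDeg ℤ ≤ 7 := hpow.trans h.floor_minkowskiBound_le
  have hf := h.two_le_inertiaDeg hp hp7 P
  obtain rfl : p = 2 := by
    have := (Nat.pow_le_pow_right hp.pos hf).trans hpow
    nlinarith [hp.two_le]
  have hf2 : P.inertiaDeg ℤ = 2 := by
    have : P.inertiaDeg ℤ < 3 := (Nat.pow_lt_pow_iff_right one_lt_two).mp (by lia)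
    lia
  have hnorm := Ideal.natAbs_pow_inertiaDeg ((2 : ℕ) : ℤ) P
  rw [hf2] at hnorm
  refine h.isPrincipal_of_absNorm_eq_four ?_ hnorm.symm
  simpa using (Ideal.mem_of_liesOver P (Ideal.span {((2 : ℕ) : ℤ)}) 2).mp
    (Ideal.mem_span_singleton_self _)

end IsBiquadratic

/-- The field `H = ℚ(√5, √17)` has narrow class number `1`. -/
theorem narrowClassNumber_sqrt5_sqrt17_eq_one
    (H : Type*) [Field H] [NumberField H]
    (a b : H) (ha : a ^ 2 = 5) (hb : b ^ 2 = 17) (hdeg : finrank ℚ H = 4) :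
    narrowClassNumber H = 1 := by
  have h : IsBiquadratic (5 : ℚ) 17 a b :=
    ⟨by simpa using ha, by simpa using hb, by norm_num, by norm_num, by norm_num, hdeg⟩
  have := h.isPrincipalIdealRing
  exact narrowClassNumber_eq_one h.exists_unit_neg_iff_eq
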